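/- (Logarithmic speedup of SRPFL over FedRep.) There exists an absolute constant C₀ > 0 with the following property. Let λ > 0, c ≥ 0, a ∈ (0, 1/4], ĉ ∈ (1, √2), let n₀ ≥ 1 and K ≥ 2 be integers, and set N := 2^K·n₀. For 1 ≤ n ≤ N let E_n := (1/λ)·Σ_{i=N−n+1}^{N} 1/i, let C := c/λ, and for 1 ≤ i ≤ K−1 let t^i := 2·log(√2·(E_{n₀·2^{i+1}} − E_{n₀·2^i})/(E_{n₀·2^i} − E_{n₀·2^{i−1}}))/log(1/(1−a)). Define T_SRPFL := Σ_{i=1}^{K−1} t^i·(E_{n₀·2^i} + C) + (E_N + C)·(2·log(1/(ĉ−1))/log(1/(1−a)) + 1) and T_FedRep := (E_N + C)·(2·log(1/(ĉ−1)) + log N)/log(1/(1−a)). Then T_SRPFL/T_FedRep ≤ C₀·(c+1)·log(1/(ĉ−1))/(log N + log(1/(ĉ−1))). -/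

import Mathlib

open Real Finset

/-! The expected order statistics satisfy
`(q - p) / (N - p) ≤ lam * (E q - E p) ≤ (q - p) / (N - q)` for `p ≤ q < N`. Up to `N / 2` nodes,
the increments of `E` over successive doublings are therefore comparable and `lam * E ≤ 1`, so
a stage of SRPFL with at most `N / 4` nodes takes boundedly many rounds (in units of
`1 / log (1 / (1 - a))`), each of normalized cost at most `1 + c`. The ratio of increments governing
the stage with `N / 2` nodes is only `O(lam * E N)`, which is harmless because the number `K` of
doublings is itself at most of order `log N ≤ lam * E N`. The partial stages together thus cost
`O(1 + c)` rounds of FedRep, which needs `log N + 2 * log (1 / (chat - 1))` of them. -/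

section ReciprocalSums

variable {𝕜 : Type*} [Field 𝕜] [LinearOrder 𝕜] [IsStrictOrderedRing 𝕜] {p q : ℕ}

lemma sum_Ioc_one_div_le (hp : 0 < p) (hpq : p ≤ q) :
    ∑ i ∈ Ioc p q, (1 : 𝕜) / i ≤ ((q : 𝕜) - p) / p := by
  have term_le : ∀ i ∈ Ioc p q, (1 : 𝕜) / i ≤ 1 / p := fun i hi =>
    one_div_le_one_div_of_le (Nat.cast_pos.2 hp) (Nat.cast_le.2 (mem_Ioc.1 hi).1.le)
  simpa [Nat.cast_sub hpq, div_eq_mul_inv] using sum_le_card_nsmul _ _ _ term_le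

lemma le_sum_Ioc_one_div (hpq : p ≤ q) :
    ((q : 𝕜) - p) / q ≤ ∑ i ∈ Ioc p q, (1 : 𝕜) / i := by
  have le_term : ∀ i ∈ Ioc p q, (1 : 𝕜) / q ≤ 1 / i := fun i hi =>
    one_div_le_one_div_of_le (Nat.cast_pos.2 (Nat.zero_lt_of_lt (mem_Ioc.1 hi).1))
      (Nat.cast_le.2 (mem_Ioc.1 hi).2)
  simpa [Nat.cast_sub hpq, div_eq_mul_inv] using card_nsmul_le_sum _ _ _ le_term

end ReciprocalSums

/-- The expected `n`-th smallest of `N` i.i.d. exponential times of rate `1`, for `n ≤ N`, in the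
form given by Rényi's representation. The quantity `E n` of the theorem is
`1 / lam * expOrderMean N n`. -/
noncomputable def expOrderMean (N n : ℕ) : ℝ := ∑ i ∈ Icc (N - n + 1) N, (1 : ℝ) / i

section ExpOrderMean

variable {N p q : ℕ}

lemma expOrderMean_eq_sum_Ioc (N n : ℕ) :
    expOrderMean N n = ∑ i ∈ Ioc (N - n) N, (1 : ℝ) / i := by
  rw [expOrderMean, Icc_add_one_left_eq_Ioc]

lemma expOrderMean_zero (N : ℕ) : expOrderMean N 0 = 0 := by
  simp [expOrderMean]

lemma expOrderMean_nonneg (N n : ℕ) : 0 ≤ expOrderMean N n :=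
  sum_nonneg fun _ _ => by positivity

lemma monotone_expOrderMean (N : ℕ) : Monotone (expOrderMean N) := fun p q hpq =>
  sum_le_sum_of_subset_of_nonneg (Icc_subset_Icc (by omega) le_rfl) fun _ _ _ => by positivity

lemma expOrderMean_sub (hpq : p ≤ q) :
    expOrderMean N q - expOrderMean N p = ∑ i ∈ Ioc (N - q) (N - p), (1 : ℝ) / i := by
  rw [expOrderMean_eq_sum_Ioc, expOrderMean_eq_sum_Ioc, sub_eq_iff_eq_add,
    sum_Ioc_consecutive _ (Nat.sub_le_sub_left hpq N) (Nat.sub_le N p)]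

lemma expOrderMean_sub_le (hpq : p ≤ q) (hq : q < N) :
    expOrderMean N q - expOrderMean N p ≤ ((q : ℝ) - p) / (N - q) := by
  rw [expOrderMean_sub hpq]
  refine (sum_Ioc_one_div_le (by omega) (by omega)).trans_eq ?_
  rw [Nat.cast_sub hq.le, Nat.cast_sub (hpq.trans hq.le), sub_sub_sub_cancel_left]

lemma le_expOrderMean_sub (hpq : p ≤ q) (hq : q ≤ N) :
    ((q : ℝ) - p) / (N - p) ≤ expOrderMean N q - expOrderMean N p := by
  rw [expOrderMean_sub hpq]
  refine Eq.trans_le ?_ (le_sum_Ioc_one_div (by omega))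
  rw [Nat.cast_sub hq, Nat.cast_sub (hpq.trans hq), sub_sub_sub_cancel_left]

lemma expOrderMean_le_one {n : ℕ} (hn : 0 < n) (h : 2 * n ≤ N) : expOrderMean N n ≤ 1 := by
  have bound := expOrderMean_sub_le (Nat.zero_le n) (show n < N by omega)
  have h' : (2 * n : ℝ) ≤ N := by exact_mod_cast h
  rw [expOrderMean_zero, sub_zero, Nat.cast_zero, sub_zero] at bound
  exact bound.trans (div_le_one_of_le₀ (by linarith) (by linarith))

lemma expOrderMean_self (N : ℕ) : expOrderMean N N = harmonic N := by
  simp [expOrderMean, harmonic_eq_sum_Icc]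

lemma log_natCast_le_expOrderMean_self (N : ℕ) : log N ≤ expOrderMean N N := by
  simpa only [expOrderMean_self, Nat.floor_natCast] using log_le_harmonic_floor N N.cast_nonneg

lemma natCast_le_two_mul_expOrderMean_self {K : ℕ} (h : 2 ^ K ≤ N) :
    (K : ℝ) ≤ 2 * expOrderMean N N := by
  have log_two_pow_le : K * log 2 ≤ log N := by
    rw [← log_pow]
    exact log_le_log (by positivity) (by exact_mod_cast h)
  have half_le_log_two : (K : ℝ) * (1 / 2) ≤ K * log 2 := by
    gcongr
    linarith [log_two_gt_d9]
  linarith [log_natCast_le_expOrderMean_self N]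

end ExpOrderMean

section Stages

variable {N M : ℕ}

/-- The ratio of the increments of `expOrderMean N` over the two doublings `2 * M` to `4 * M` and
`M` to `2 * M` of the number of participating nodes, which determines the length of the stage
with `2 * M` nodes. -/
noncomputable def incrementRatio (N M : ℕ) : ℝ :=
  (expOrderMean N (4 * M) - expOrderMean N (2 * M)) /
    (expOrderMean N (2 * M) - expOrderMean N M)

lemma incrementRatio_nonneg (N M : ℕ) : 0 ≤ incrementRatio N M :=
  div_nonneg (sub_nonneg.2 (monotone_expOrderMean N (by omega)))
    (sub_nonneg.2 (monotone_expOrderMean N (by omega)))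

lemma incrementRatio_le_four (hM : 0 < M) (h : 7 * M ≤ N) : incrementRatio N M ≤ 4 := by
  have numerator_le := expOrderMean_sub_le (N := N) (show 2 * M ≤ 4 * M by omega) (by omega)
  have le_denominator := le_expOrderMean_sub (N := N) (show M ≤ 2 * M by omega) (by omega)
  have hM' : (0 : ℝ) < M := Nat.cast_pos.2 hM
  have h' : (7 * M : ℝ) ≤ N := by exact_mod_cast h
  push_cast at numerator_le le_denominator
  have compare : ((4 * M : ℝ) - 2 * M) / (N - 4 * M) ≤ 4 * ((2 * M - M) / (N - M)) := by
    rw [← mul_div_assoc, div_le_div_iff₀ (by linarith) (by linarith)]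
    nlinarith
  refine div_le_of_le_mul₀ (sub_nonneg.2 (monotone_expOrderMean N (by omega))) (by norm_num) ?_
  linarith

lemma incrementRatio_four_mul_le (hM : 0 < M) :
    incrementRatio (4 * M) M ≤ 3 * expOrderMean (4 * M) (4 * M) := by
  have hM' : (0 : ℝ) < M := Nat.cast_pos.2 hM
  have third_le : 1 / 3 ≤ expOrderMean (4 * M) (2 * M) - expOrderMean (4 * M) M := by
    refine Eq.trans_le ?_ (le_expOrderMean_sub (by omega) (by omega))
    push_cast
    rw [eq_div_iff (ne_of_gt (by linarith))]
    ring
  have total_nonneg := expOrderMean_nonneg (4 * M) (4 * M)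
  rw [incrementRatio, div_le_iff₀ (by linarith)]
  nlinarith [expOrderMean_nonneg (4 * M) (2 * M)]

/-- The number of rounds, in units of `1 / log (1 / (1 - a))`, that SRPFL spends in the stage with
`2 * M` out of `N` nodes: the `t i` of the theorem for `M = n₀ * 2 ^ (i - 1)`. -/
noncomputable def stageRounds (N M : ℕ) : ℝ := 2 * log (√2 * incrementRatio N M)

lemma stageRounds_le (N M : ℕ) : stageRounds N M ≤ 3 * incrementRatio N M := by
  have log_le : log (√2 * incrementRatio N M) ≤ √2 * incrementRatio N M :=
    log_le_self (mul_nonneg (sqrt_nonneg 2) (incrementRatio_nonneg N M))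
  have sqrt_le : √2 * incrementRatio N M ≤ 3 / 2 * incrementRatio N M :=
    mul_le_mul_of_nonneg_right sqrt_two_lt_three_halves.le (incrementRatio_nonneg N M)
  rw [stageRounds]
  linarith

lemma stageRounds_mul_le {B c : ℝ} (hM : 0 < M) (h : 4 * M ≤ N) (hc : 0 ≤ c) (hB : 0 ≤ B)
    (rounds_le : stageRounds N M ≤ B) :
    stageRounds N M * (expOrderMean N (2 * M) + c) ≤ B * (1 + c) :=
  mul_le_mul rounds_le (add_le_add_left (expOrderMean_le_one (by omega) (by omega)) c)
    (add_nonneg (expOrderMean_nonneg _ _) hc) hB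

lemma early_stageRounds_mul_le {c : ℝ} (hM : 0 < M) (h : 7 * M ≤ N) (hc : 0 ≤ c) :
    stageRounds N M * (expOrderMean N (2 * M) + c) ≤ 12 * (1 + c) :=
  stageRounds_mul_le hM (by omega) hc (by norm_num) <|
    (stageRounds_le N M).trans (by linarith [incrementRatio_le_four hM h])

lemma last_stageRounds_mul_le {c : ℝ} (hM : 0 < M) (hc : 0 ≤ c) :
    stageRounds (4 * M) M * (expOrderMean (4 * M) (2 * M) + c) ≤
      9 * expOrderMean (4 * M) (4 * M) * (1 + c) :=
  stageRounds_mul_le hM le_rfl hc (mul_nonneg (by norm_num) (expOrderMean_nonneg _ _)) <|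
    (stageRounds_le _ M).trans (by linarith [incrementRatio_four_mul_le hM])

lemma sum_stageRounds_mul_le {c : ℝ} {n₀ K : ℕ} (hc : 0 ≤ c) (hn : 0 < n₀) (hK : 2 ≤ K)
    (hN : N = 2 ^ K * n₀) :
    ∑ j ∈ range (K - 1), stageRounds N (n₀ * 2 ^ j) * (expOrderMean N (2 * (n₀ * 2 ^ j)) + c) ≤
      33 * (1 + c) * expOrderMean N N := by
  obtain ⟨k, rfl⟩ : ∃ k, K = k + 2 := ⟨K - 2, by omega⟩
  have early_stage_le : ∀ j ∈ range k,
      stageRounds N (n₀ * 2 ^ j) * (expOrderMean N (2 * (n₀ * 2 ^ j)) + c) ≤ 12 * (1 + c) := by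
    intro j hj
    have hj : j < k := mem_range.1 hj
    have eight_mul_le : 8 * (n₀ * 2 ^ j) ≤ N := calc
      8 * (n₀ * 2 ^ j) = 2 ^ (j + 3) * n₀ := by ring
      _ ≤ 2 ^ (k + 2) * n₀ :=
        Nat.mul_le_mul_right _ (Nat.pow_le_pow_right two_pos (by omega))
      _ = N := hN.symm
    exact early_stageRounds_mul_le (by positivity) (by omega) hc
  have last_stage_le :
      stageRounds N (n₀ * 2 ^ k) * (expOrderMean N (2 * (n₀ * 2 ^ k)) + c) ≤
        9 * expOrderMean N N * (1 + c) := by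
    obtain rfl : N = 4 * (n₀ * 2 ^ k) := by rw [hN]; ring
    exact last_stageRounds_mul_le (by positivity) hc
  have k_le : (k : ℝ) ≤ 2 * expOrderMean N N :=
    natCast_le_two_mul_expOrderMean_self <| calc
      2 ^ k ≤ 2 ^ (k + 2) := Nat.pow_le_pow_right two_pos (by omega)
      _ ≤ N := hN ▸ Nat.le_mul_of_pos_right _ hn
  rw [show k + 2 - 1 = k + 1 from rfl, sum_range_succ]
  refine (add_le_add (sum_le_card_nsmul _ _ _ early_stage_le) last_stage_le).trans ?_
  rw [card_range, nsmul_eq_mul]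
  calc k * (12 * (1 + c)) + 9 * expOrderMean N N * (1 + c)
      ≤ 2 * expOrderMean N N * (12 * (1 + c)) + 9 * expOrderMean N N * (1 + c) := by gcongr
    _ = 33 * (1 + c) * expOrderMean N N := by ring

lemma sum_stage_times_eq {lam c L : ℝ} (hlam : lam ≠ 0) {n₀ K : ℕ} {E t : ℕ → ℝ}
    (hE : ∀ i ≤ K, E (n₀ * 2 ^ i) = 1 / lam * expOrderMean N (n₀ * 2 ^ i))
    (ht : ∀ i, 1 ≤ i → i ≤ K - 1 → t i = 2 * log (√2 * (E (n₀ * 2 ^ (i + 1)) - E (n₀ * 2 ^ i)) /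
      (E (n₀ * 2 ^ i) - E (n₀ * 2 ^ (i - 1)))) / L) :
    ∑ i ∈ Icc 1 (K - 1), t i * (E (n₀ * 2 ^ i) + c / lam) =
      1 / (lam * L) * ∑ j ∈ range (K - 1),
        stageRounds N (n₀ * 2 ^ j) * (expOrderMean N (2 * (n₀ * 2 ^ j)) + c) := by
  rw [← Ico_add_one_right_eq_Icc, sum_Ico_eq_sum_range, mul_sum, Nat.add_sub_cancel]
  refine sum_congr rfl fun j hj => ?_
  have hj : j < K - 1 := mem_range.1 hj
  have double : n₀ * 2 ^ (j + 1) = 2 * (n₀ * 2 ^ j) := by ring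
  have quadruple : n₀ * 2 ^ (j + 1 + 1) = 4 * (n₀ * 2 ^ j) := by ring
  rw [add_comm 1 j, ht _ (by omega) (by omega), hE _ (by omega), hE _ (by omega),
    Nat.add_sub_cancel, hE j (by omega), double, quadruple, stageRounds, incrementRatio,
    ← mul_sub, ← mul_sub, mul_div_assoc √2, mul_div_mul_left _ _ (one_div_ne_zero hlam)]
  ring

end Stages

lemma normalized_time_ratio_le {S A c l L x : ℝ} (hS : 0 < S) (hc : 0 ≤ c) (hl : 1 / 2 ≤ l)
    (hLl : L ≤ l) (hx : 0 ≤ x) (hA : A ≤ 33 * (1 + c) * S) :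
    (A + (S + c) * (2 * l + L)) / ((S + c) * (2 * l + x)) ≤ 69 * (c + 1) * l / (x + l) := by
  have l_pos : 0 < l := by linarith
  have partial_stages_le : A ≤ (S + c) * (66 * (c + 1) * l) := calc
    A ≤ 33 * (1 + c) * S := hA
    _ = 33 * (1 + c) * S * 1 := (mul_one _).symm
    _ ≤ 33 * (1 + c) * (S + c) * (2 * l) := by gcongr <;> linarith
    _ = (S + c) * (66 * (c + 1) * l) := by ring
  have final_stage_le : (S + c) * (2 * l + L) ≤ (S + c) * (3 * (c + 1) * l) := by
    gcongr
    nlinarith [mul_nonneg hc l_pos.le]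
  calc (A + (S + c) * (2 * l + L)) / ((S + c) * (2 * l + x))
      ≤ (S + c) * (69 * (c + 1) * l) / ((S + c) * (2 * l + x)) := by
        gcongr
        linarith
    _ = 69 * (c + 1) * l / (2 * l + x) := mul_div_mul_left _ _ (by positivity)
    _ ≤ 69 * (c + 1) * l / (x + l) :=
        div_le_div_of_nonneg_left (by positivity) (by linarith) (by linarith)

lemma one_sub_le_log_one_div {x : ℝ} (hx : 0 < x) : 1 - x ≤ log (1 / x) := by
  simpa using one_sub_inv_le_log_of_pos (one_div_pos.2 hx)

/-- logarithmic speedup of SRPFL over straggler-prone FedRep. -/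
theorem srpfl_logarithmic_speedup :
    ∃ C₀ : ℝ, 0 < C₀ ∧
      ∀ (lam c a chat : ℝ) (n₀ K N : ℕ),
        0 < lam → 0 ≤ c → 0 < a → a ≤ 1 / 4 → 1 < chat → chat < Real.sqrt 2 →
        1 ≤ n₀ → 2 ≤ K → N = 2 ^ K * n₀ →
        ∀ E : ℕ → ℝ,
          (∀ n, 1 ≤ n → n ≤ N →
            E n = (1 / lam) * ∑ i ∈ Finset.Icc (N - n + 1) N, (1 : ℝ) / i) →
        ∀ C : ℝ, C = c / lam →
        ∀ t : ℕ → ℝ,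
          (∀ i, 1 ≤ i → i ≤ K - 1 →
            t i = 2 * Real.log (Real.sqrt 2 * (E (n₀ * 2 ^ (i + 1)) - E (n₀ * 2 ^ i)) /
                (E (n₀ * 2 ^ i) - E (n₀ * 2 ^ (i - 1)))) / Real.log (1 / (1 - a))) →
        ∀ Tsrpfl Tfedrep : ℝ,
          Tsrpfl = (∑ i ∈ Finset.Icc 1 (K - 1), t i * (E (n₀ * 2 ^ i) + C)) +
              (E N + C) * (2 * Real.log (1 / (chat - 1)) / Real.log (1 / (1 - a)) + 1) →
          Tfedrep = (E N + C) * (2 * Real.log (1 / (chat - 1)) + Real.log N) /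
              Real.log (1 / (1 - a)) →
        Tsrpfl / Tfedrep ≤ C₀ * (c + 1) * Real.log (1 / (chat - 1)) /
              (Real.log N + Real.log (1 / (chat - 1))) := by
  refine ⟨69, by norm_num, ?_⟩
  rintro lam c a chat n₀ K N hlam hc ha ha4 hch hch2 hn hK hN E hE C rfl t ht _ _ rfl rfl
  have pow_le : 2 ^ K ≤ N := hN ▸ Nat.le_mul_of_pos_right _ hn
  have stage_mean : ∀ i ≤ K, E (n₀ * 2 ^ i) = 1 / lam * expOrderMean N (n₀ * 2 ^ i) :=
    fun i hi => hE _ (Nat.mul_pos hn (by positivity))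
      (by rw [hN, mul_comm]; gcongr; norm_num)
  have mean_self_pos : 0 < expOrderMean N N := by
    have : (0 : ℝ) < K := by positivity
    linarith [natCast_le_two_mul_expOrderMean_self pow_le]
  have final_mean : E N = 1 / lam * expOrderMean N N :=
    hE N (Nat.one_le_two_pow.trans pow_le) le_rfl
  have half_le_log : 1 / 2 ≤ log (1 / (chat - 1)) := by
    linarith [one_sub_le_log_one_div (sub_pos.2 hch), sqrt_two_lt_three_halves]
  have contraction_pos : 0 < log (1 / (1 - a)) :=
    log_pos (one_lt_one_div (by linarith) (by linarith))
  have contraction_le : log (1 / (1 - a)) ≤ log (1 / (chat - 1)) :=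
    log_le_log (one_div_pos.2 (by linarith)) <| one_div_le_one_div_of_le (by linarith) <| by
      linarith [sqrt_two_lt_three_halves]
  rw [sum_stage_times_eq hlam.ne' stage_mean ht, final_mean]
  convert normalized_time_ratio_le mean_self_pos hc half_le_log contraction_le
    (log_natCast_nonneg N) (sum_stageRounds_mul_le hc hn hK hN) using 1
  field_simp
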